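/- Fix an integer s ≥ 3. For each p ∈ [1,∞] and each integer j > 0 there exists a constant C (depending only on φ, s, p, j) such that for every N ∈ 2^ℤ and every Schwartz function q : ℝ → ℂ, ‖Π²_{<N} q^{(s+j)}‖_{L^p(ℝ)} ≤ C N^j ‖P²_{<2N} q^{(s)}‖_{L^p(ℝ)}. -/

import Mathlib

open MeasureTheory
open scoped ENNReal NNReal

/-- The Fourier transform with the paper's normalization:
`f̂(ξ) = (2π)^{-1/2} ∫ e^{-iξx} f(x) dx`. -/
noncomputable def ft (f : ℝ → ℂ) (ξ : ℝ) : ℂ :=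
  (Real.sqrt (2 * Real.pi) : ℂ)⁻¹ * ∫ x : ℝ, Complex.exp (-(Complex.I * (ξ : ℂ) * (x : ℂ))) * f x

/-- The Fourier multiplier operator with symbol `m`. -/
noncomputable def fmul (m : ℝ → ℝ) (f : ℝ → ℂ) (x : ℝ) : ℂ :=
  (Real.sqrt (2 * Real.pi) : ℂ)⁻¹ *
    ∫ ξ : ℝ, Complex.exp (Complex.I * (ξ : ℂ) * (x : ℂ)) * (m ξ : ℂ) * ft f ξ

/-- `ψ(ξ) = √(φ(ξ) − φ(2ξ))`. -/
noncomputable def psi (φ : ℝ → ℝ) (ξ : ℝ) : ℝ := Real.sqrt (φ ξ - φ (2 * ξ))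

/-- `m_hi(ξ) = Σ_{K∈2^ℤ, K<1} K^s ψ²(ξ/K) + Σ_{K∈2^ℤ, K≥1} ψ²(ξ/K)`. -/
noncomputable def mhi (φ : ℝ → ℝ) (s : ℕ) (ξ : ℝ) : ℝ :=
  ∑' n : ℤ, (if n < 0 then ((2 : ℝ) ^ n) ^ s else 1) * (psi φ (ξ / (2 : ℝ) ^ n)) ^ 2

/-- The symbol `Σ_{K∈2^ℤ, K<N} ψ²(ξ/K)` of the low-frequency projection `P²_{<N}`. -/
noncomputable def plo (φ : ℝ → ℝ) (N : ℝ) (ξ : ℝ) : ℝ :=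
  ∑' k : ℤ, if (2 : ℝ) ^ k < N then (psi φ (ξ / (2 : ℝ) ^ k)) ^ 2 else 0

/-! By Young's inequality, a multiplier whose symbol is the Fourier transform of an `L¹` kernel is
bounded on every `Lᵖ`, with one bound for all dilates of the symbol. Such symbols form an algebra
`A`, closed under dilations and under absolutely summable superpositions of dilates. Since
`∑_{K<1} K^s < ∞`, the function `1 - m_hi(ξ) = φ(2ξ) - ∑_{K<1} K^s ψ²(ξ/K)` belongs to `A`, hence so
does `1 - m_hi²`. The latter is supported in `|ξ| ≤ 1`, where `φ = 1`, so multiplying it by `(iξ)^j`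
is the same as multiplying it by the Schwartz function `(iξ)^j φ(ξ)`, which stays in `A`.
As `φ(ξ/N)` is the symbol of `P²_{<2N}`, the estimate is the `Lᵖ` bound for the dilate by `1/N` of
the symbol `(iξ)^j (1 - m_hi(ξ)²)`. -/

open Filter Topology
open scoped FourierTransform Convolution

section Young

lemma rpow_lintegral_mul_le {α : Type*} [MeasurableSpace α] {μ : Measure α} {a b : α → ℝ≥0∞}
    (ha : AEMeasurable a μ) (hb : AEMeasurable b μ) {r : ℝ} (hr : 1 ≤ r) :
    (∫⁻ t, a t * b t ∂μ) ^ r ≤ (∫⁻ t, a t ∂μ) ^ (r - 1) * ∫⁻ t, a t * b t ^ r ∂μ := by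
  have hr₀ : 0 < r := one_pos.trans_le hr
  have hr' : 0 ≤ 1 - r⁻¹ := sub_nonneg.2 (inv_le_one_of_one_le₀ hr)
  have split : ∀ t, a t * b t = a t ^ (1 - r⁻¹) * (a t * b t ^ r) ^ r⁻¹ := fun t ↦ by
    rw [ENNReal.mul_rpow_of_nonneg _ _ (inv_nonneg.2 hr₀.le), ENNReal.rpow_rpow_inv hr₀.ne',
      ← mul_assoc, ← ENNReal.rpow_add_of_nonneg _ _ hr' (inv_nonneg.2 hr₀.le), sub_add_cancel,
      ENNReal.rpow_one]
  have hölder := ENNReal.lintegral_mul_norm_pow_le ha (ha.mul (hb.pow_const r)) hr'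
    (inv_nonneg.2 hr₀.le) (sub_add_cancel _ _)
  simp only [Pi.mul_apply, ← split] at hölder
  refine (ENNReal.rpow_le_rpow hölder hr₀.le).trans_eq ?_
  rw [ENNReal.mul_rpow_of_nonneg _ _ hr₀.le, ENNReal.rpow_inv_rpow hr₀.ne', ← ENNReal.rpow_mul,
    sub_mul, one_mul, inv_mul_cancel₀ hr₀.ne']

variable {G : Type*} [AddCommGroup G] [MeasurableSpace G] [MeasurableAdd₂ G] [MeasurableNeg G]
  {μ : Measure G} [SFinite μ] [μ.IsAddLeftInvariant] {a b : G → ℝ≥0∞}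

lemma lintegral_lconvolution (ha : AEMeasurable a μ) (hb : AEMeasurable b μ) :
    ∫⁻ x, (a ⋆ₗ[μ] b) x ∂μ = (∫⁻ x, a x ∂μ) * ∫⁻ x, b x ∂μ := by
  calc ∫⁻ x, ∫⁻ y, a y * b (-y + x) ∂μ ∂μ
      = ∫⁻ y, ∫⁻ x, a y * b (-y + x) ∂μ ∂μ := lintegral_lintegral_swap (by fun_prop)
    _ = ∫⁻ y, a y * ∫⁻ x, b x ∂μ ∂μ := by
        refine lintegral_congr fun y ↦ ?_
        rw [lintegral_const_mul'' _ (by fun_prop), lintegral_add_left_eq_self b]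
    _ = (∫⁻ x, a x ∂μ) * ∫⁻ x, b x ∂μ := lintegral_mul_const'' _ ha

lemma eLpNorm_lconvolution_le (ha : AEMeasurable a μ) (hb : AEMeasurable b μ)
    {p : ℝ≥0∞} (hp : 1 ≤ p) :
    eLpNorm (a ⋆ₗ[μ] b) p μ ≤ (∫⁻ t, a t ∂μ) * eLpNorm b p μ := by
  have translate (x : G) : Measure.QuasiMeasurePreserving (fun t ↦ -t + x) μ μ := by
    simpa only [sub_eq_neg_add] using quasiMeasurePreserving_sub_left μ x
  rcases eq_or_ne p ∞ with rfl | hp_top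
  · simp only [eLpNorm_exponent_top]
    refine eLpNormEssSup_le_of_ae_enorm_bound (.of_forall fun x ↦ ?_)
    calc ∫⁻ t, a t * b (-t + x) ∂μ ≤ ∫⁻ t, a t * eLpNormEssSup b μ ∂μ := by
          refine lintegral_mono_ae ?_
          filter_upwards [(translate x).ae (enorm_ae_le_eLpNormEssSup b μ)] with t ht
          gcongr
          exact ht
      _ = (∫⁻ t, a t ∂μ) * eLpNormEssSup b μ := lintegral_mul_const'' _ ha
  · have hr : 1 ≤ p.toReal := by simpa using ENNReal.toReal_mono hp_top hp
    have hr₀ : 0 < p.toReal := one_pos.trans_le hr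
    rw [eLpNorm_eq_lintegral_rpow_enorm_toReal (one_pos.trans_le hp).ne' hp_top,
      eLpNorm_eq_lintegral_rpow_enorm_toReal (one_pos.trans_le hp).ne' hp_top, one_div,
      ENNReal.rpow_inv_le_iff hr₀, ENNReal.mul_rpow_of_nonneg _ _ hr₀.le,
      ENNReal.rpow_inv_rpow hr₀.ne']
    simp only [enorm_eq_self]
    set r := p.toReal
    set A := ∫⁻ t, a t ∂μ
    calc ∫⁻ x, (a ⋆ₗ[μ] b) x ^ r ∂μ
        ≤ ∫⁻ x, A ^ (r - 1) * (a ⋆ₗ[μ] fun t ↦ b t ^ r) x ∂μ := by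
          refine lintegral_mono fun x ↦ ?_
          exact rpow_lintegral_mul_le ha (hb.comp_quasiMeasurePreserving (translate x)) hr
      _ = A ^ (r - 1) * (A * ∫⁻ x, b x ^ r ∂μ) := by
          rw [lintegral_const_mul'' _ (aemeasurable_lconvolution ha (hb.pow_const r)),
            lintegral_lconvolution ha (hb.pow_const r)]
      _ = A ^ r * ∫⁻ x, b x ^ r ∂μ := by
          rw [← mul_assoc]
          congr 1
          nth_rw 2 [← ENNReal.rpow_one A]
          rw [← ENNReal.rpow_add_of_nonneg _ _ (sub_nonneg.2 hr) zero_le_one, sub_add_cancel]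

variable {𝕜 E F H : Type*} [NontriviallyNormedField 𝕜] [NormedAddCommGroup E] [NormedSpace 𝕜 E]
  [NormedAddCommGroup F] [NormedSpace 𝕜 F] [NormedAddCommGroup H] [NormedSpace 𝕜 H]
  [NormedSpace ℝ H]

lemma eLpNorm_convolution_le (L : E →L[𝕜] F →L[𝕜] H) {f : G → E} {g : G → F}
    (hf : AEStronglyMeasurable f μ) (hg : AEStronglyMeasurable g μ) {p : ℝ≥0∞} (hp : 1 ≤ p) :
    eLpNorm (f ⋆[L, μ] g) p μ ≤ ‖L‖ₑ * eLpNorm f 1 μ * eLpNorm g p μ := by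
  have pointwise (x : G) : ‖(f ⋆[L, μ] g) x‖ₑ ≤ ((fun t ↦ ‖L‖ₑ * ‖f t‖ₑ) ⋆ₗ[μ] (‖g ·‖ₑ)) x := by
    refine (enorm_integral_le_lintegral_enorm _).trans (lintegral_mono fun t ↦ ?_)
    rw [neg_add_eq_sub]
    calc ‖L (f t) (g (x - t))‖ₑ ≤ ‖L (f t)‖ₑ * ‖g (x - t)‖ₑ := (L (f t)).le_opENorm _
      _ ≤ ‖L‖ₑ * ‖f t‖ₑ * ‖g (x - t)‖ₑ := by gcongr; exact L.le_opENorm _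
  calc eLpNorm (f ⋆[L, μ] g) p μ
      ≤ eLpNorm ((fun t ↦ ‖L‖ₑ * ‖f t‖ₑ) ⋆ₗ[μ] (‖g ·‖ₑ)) p μ := eLpNorm_mono_enorm pointwise
    _ ≤ (∫⁻ t, ‖L‖ₑ * ‖f t‖ₑ ∂μ) * eLpNorm (‖g ·‖ₑ) p μ :=
        eLpNorm_lconvolution_le (hf.enorm.const_mul _) hg.enorm hp
    _ = ‖L‖ₑ * eLpNorm f 1 μ * eLpNorm g p μ := by
        rw [lintegral_const_mul'' _ hf.enorm, eLpNorm_one_eq_lintegral_enorm, eLpNorm_enorm]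

end Young

section FourierAlgebra

variable {V : Type*} [NormedAddCommGroup V] [InnerProductSpace ℝ V] [FiniteDimensional ℝ V]
  [MeasurableSpace V] [BorelSpace V]

variable (V) in
/-- The Fourier algebra `A(V) = 𝓕 (L¹(V))`: the symbols whose multiplier operator is convolution
with an integrable kernel. -/
noncomputable def fourierAlgebra : NonUnitalSubalgebra ℂ (V → ℂ) where
  carrier := {m | ∃ f : Lp ℂ 1 (volume : Measure V), Real.Lp.fourierTransformCLM V ℂ f = m}
  add_mem' := by
    rintro _ _ ⟨f, rfl⟩ ⟨g, rfl⟩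
    exact ⟨f + g, by simp only [map_add, BoundedContinuousFunction.coe_add]⟩
  zero_mem' := ⟨0, by simp only [map_zero, BoundedContinuousFunction.coe_zero]⟩
  smul_mem' := by
    rintro c _ ⟨f, rfl⟩
    exact ⟨c • f, by simp only [map_smul, BoundedContinuousFunction.coe_smul]; rfl⟩
  mul_mem' := by
    rintro _ _ ⟨f, rfl⟩ ⟨g, rfl⟩
    have hf := L1.integrable_coeFn f
    have hg := L1.integrable_coeFn g
    have hfg := memLp_one_iff_integrable.2
      (hf.integrable_convolution (ContinuousLinearMap.mul ℂ ℂ) hg)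
    refine ⟨hfg.toLp, ?_⟩
    rw [Real.Lp.fourierTransformCLM_apply, Real.fourierTransform_toLp]
    exact funext fun ξ ↦ Real.fourier_mul_convolution_eq hf hg ξ

lemma mem_fourierAlgebra_iff {m : V → ℂ} :
    m ∈ fourierAlgebra V ↔ ∃ f : V → ℂ, Integrable f ∧ 𝓕 f = m := by
  refine ⟨fun ⟨f, hf⟩ ↦ ⟨f, L1.integrable_coeFn f, hf⟩, fun ⟨f, hf, hm⟩ ↦ ?_⟩
  refine ⟨(memLp_one_iff_integrable.2 hf).toLp, ?_⟩
  rw [Real.Lp.fourierTransformCLM_apply, Real.fourierTransform_toLp, hm]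

lemma schwartzMap_mem_fourierAlgebra (f : SchwartzMap V ℂ) : ⇑f ∈ fourierAlgebra V := by
  refine mem_fourierAlgebra_iff.2 ⟨(𝓕⁻ f : SchwartzMap V ℂ), SchwartzMap.integrable _, ?_⟩
  rw [← SchwartzMap.fourier_coe, FourierTransform.fourier_fourierInv_eq]

lemma mem_fourierAlgebra_of_hasCompactSupport {m : V → ℂ} (compact : HasCompactSupport m)
    (smooth : ContDiff ℝ (⊤ : ℕ∞) m) : m ∈ fourierAlgebra V :=
  schwartzMap_mem_fourierAlgebra (compact.toSchwartzMap smooth)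

/-- The dilation `x ↦ |a|⁻ᵈ f (a⁻¹ x)`, `d = dim V`, which preserves the `L¹` norm and becomes
`ξ ↦ a ξ` on the Fourier side. -/
noncomputable def l1Dilation (a : ℝ) (f : V → ℂ) (x : V) : ℂ :=
  (|a ^ Module.finrank ℝ V|⁻¹ : ℝ) • f (a⁻¹ • x)

variable {a : ℝ} {f : V → ℂ}

lemma integrable_l1Dilation (hf : Integrable f) (ha : a ≠ 0) : Integrable (l1Dilation a f) :=
  ((integrable_comp_smul_iff volume f (inv_ne_zero ha)).2 hf).smul
    (|a ^ Module.finrank ℝ V|⁻¹ : ℝ)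

lemma integral_norm_l1Dilation (f : V → ℂ) (ha : a ≠ 0) :
    ∫ x, ‖l1Dilation a f x‖ = ∫ x, ‖f x‖ := by
  have jacobian : |a ^ Module.finrank ℝ V| ≠ 0 := abs_ne_zero.2 (pow_ne_zero _ ha)
  simp only [l1Dilation, norm_smul, integral_const_mul]
  rw [Measure.integral_comp_inv_smul volume (‖f ·‖), norm_inv, Real.norm_eq_abs, abs_abs,
    smul_eq_mul, inv_mul_cancel_left₀ jacobian]

lemma fourier_l1Dilation (f : V → ℂ) (ha : a ≠ 0) (ξ : V) :
    𝓕 (l1Dilation a f) ξ = 𝓕 f (a • ξ) := by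
  have jacobian : |a ^ Module.finrank ℝ V| ≠ 0 := abs_ne_zero.2 (pow_ne_zero _ ha)
  have inner_eq (v : V) : inner ℝ v ξ = inner ℝ (a⁻¹ • v) (a • ξ) := by
    rw [real_inner_smul_left, real_inner_smul_right, inv_mul_cancel_left₀ ha]
  simp only [Real.fourier_eq, l1Dilation, inner_eq, smul_comm (Real.fourierChar _), integral_smul]
  rw [Measure.integral_comp_inv_smul volume
    (fun v : V ↦ Real.fourierChar (-inner ℝ v (a • ξ)) • f v), inv_smul_smul₀ jacobian]

lemma tsum_comp_smul_mem_fourierAlgebra {ι : Type*} {m : V → ℂ} (hm : m ∈ fourierAlgebra V)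
    {c : ι → ℂ} (hc : Summable fun i ↦ ‖c i‖) {a : ι → ℝ} (ha : ∀ i, a i ≠ 0) :
    (fun ξ ↦ ∑' i, c i * m (a i • ξ)) ∈ fourierAlgebra V := by
  obtain ⟨f, hf, rfl⟩ := mem_fourierAlgebra_iff.1 hm
  set F : ι → Lp ℂ 1 (volume : Measure V) := fun i ↦ (integrable_l1Dilation hf (ha i)).toL1
  have norm_F (i : ι) : ‖F i‖ = ∫ x, ‖f x‖ := by
    rw [← integral_norm_l1Dilation f (ha i)]
    exact L1.norm_of_fun_eq_integral_norm (integrable_l1Dilation hf (ha i))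
  have fourier_F (i : ι) (ξ : V) : Real.Lp.fourierTransformCLM V ℂ (F i) ξ = 𝓕 f (a i • ξ) := by
    rw [← fourier_l1Dilation f (ha i), Real.Lp.fourierTransformCLM_apply]
    exact congrFun (Real.fourierTransform_toLp _) ξ
  have summable_F : Summable fun i ↦ c i • F i := by
    refine .of_norm ?_
    simpa only [norm_smul, norm_F] using hc.mul_right _
  refine ⟨∑' i, c i • F i, funext fun ξ ↦ ?_⟩
  have hasSum_fourier := (summable_F.hasSum.mapL (Real.Lp.fourierTransformCLM V ℂ)).mapL
    (BoundedContinuousFunction.evalCLM ℂ ξ)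
  refine hasSum_fourier.tsum_eq.symm.trans (tsum_congr fun i ↦ ?_)
  rw [map_smul, map_smul, BoundedContinuousFunction.evalCLM_apply, fourier_F, smul_eq_mul]

lemma comp_smul_mem_fourierAlgebra {m : V → ℂ} (hm : m ∈ fourierAlgebra V) (ha : a ≠ 0) :
    (fun ξ ↦ m (a • ξ)) ∈ fourierAlgebra V := by
  obtain ⟨f, hf, rfl⟩ := mem_fourierAlgebra_iff.1 hm
  exact mem_fourierAlgebra_iff.2
    ⟨l1Dilation a f, integrable_l1Dilation hf ha, funext (fourier_l1Dilation f ha)⟩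

lemma fourierInv_fourier_mul {F : V → ℂ} (hf : Integrable f) (hF : Integrable F) :
    𝓕⁻ (fun ξ ↦ 𝓕 f ξ * F ξ) = f ⋆[ContinuousLinearMap.mul ℂ ℂ] 𝓕⁻ F := by
  ext x
  set modulated : V → ℂ := fun ξ ↦ Real.fourierChar (inner ℝ ξ x) • F ξ with modulated_def
  have integrable_modulated : Integrable modulated := by
    simpa only [inner_neg_right, neg_neg] using (Real.fourierIntegral_convergent_iff (-x)).2 hF
  have fourier_modulated (t : V) : 𝓕 modulated t = 𝓕⁻ F (x - t) := by
    rw [Real.fourier_eq, Real.fourierInv_eq]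
    refine integral_congr_ae (.of_forall fun ξ ↦ ?_)
    simp only [modulated_def, smul_smul]
    rw [← AddChar.map_add_eq_mul, inner_sub_right, neg_add_eq_sub]
  calc 𝓕⁻ (fun ξ ↦ 𝓕 f ξ * F ξ) x = ∫ ξ, 𝓕 f ξ • modulated ξ := by
        rw [Real.fourierInv_eq]
        simp only [modulated_def, smul_comm _ (Real.fourierChar _), smul_eq_mul]
    _ = ∫ t, f t • 𝓕 modulated t := by
        have swap := VectorFourier.integral_fourierIntegral_smul_eq_flip (L := innerₗ V)
          Real.continuous_fourierChar continuous_inner hf integrable_modulated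
        rwa [flip_innerₗ] at swap
    _ = (f ⋆[ContinuousLinearMap.mul ℂ ℂ] 𝓕⁻ F) x := by
        simp only [fourier_modulated, convolution_def, smul_eq_mul, ContinuousLinearMap.mul_apply']

lemma exists_eLpNorm_fourierInv_mul_le {m : V → ℂ} (hm : m ∈ fourierAlgebra V) :
    ∃ C : ℝ≥0, ∀ a : ℝ, a ≠ 0 → ∀ p : ℝ≥0∞, 1 ≤ p → ∀ F : V → ℂ, Integrable F →
      eLpNorm (𝓕⁻ fun ξ ↦ m (a • ξ) * F ξ) p volume ≤ C * eLpNorm (𝓕⁻ F) p volume := by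
  obtain ⟨f, hf, rfl⟩ := mem_fourierAlgebra_iff.1 hm
  refine ⟨(∫ x, ‖f x‖).toNNReal, fun a ha p hp F hF ↦ ?_⟩
  have hfa := integrable_l1Dilation hf ha
  have norm_l1Dilation : eLpNorm (l1Dilation a f) 1 volume = (∫ x, ‖f x‖).toNNReal := by
    rw [eLpNorm_one_eq_lintegral_enorm, ← ofReal_integral_norm_eq_lintegral_enorm hfa,
      integral_norm_l1Dilation f ha, ENNReal.ofReal]
  have continuous_fourierInv : Continuous (𝓕⁻ F) := by
    rw [funext (Real.fourierInv_eq_fourier_neg F)]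
    exact (VectorFourier.fourierIntegral_continuous Real.continuous_fourierChar continuous_inner
      hF).comp continuous_neg
  calc eLpNorm (𝓕⁻ fun ξ ↦ 𝓕 f (a • ξ) * F ξ) p volume
      = eLpNorm (l1Dilation a f ⋆[ContinuousLinearMap.mul ℂ ℂ] 𝓕⁻ F) p volume := by
        simp only [← fourier_l1Dilation f ha, fourierInv_fourier_mul hfa hF]
    _ ≤ ‖ContinuousLinearMap.mul ℂ ℂ‖ₑ * eLpNorm (l1Dilation a f) 1 volume *
          eLpNorm (𝓕⁻ F) p volume :=
        eLpNorm_convolution_le _ hfa.1 continuous_fourierInv.aestronglyMeasurable hp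
    _ = (∫ x, ‖f x‖).toNNReal * eLpNorm (𝓕⁻ F) p volume := by
        rw [← ofReal_norm, ContinuousLinearMap.opNorm_mul, ENNReal.ofReal_one, one_mul,
          norm_l1Dilation]

end FourierAlgebra

section Cutoff

lemma hasSum_sub_of_monotone {f : ℕ → ℝ} (hf : Monotone f) {l : ℝ}
    (hl : Tendsto f atTop (𝓝 l)) : HasSum (fun i ↦ f (i + 1) - f i) (l - f 0) := by
  rw [hasSum_iff_tendsto_nat_of_nonneg fun i ↦ sub_nonneg.2 (hf i.le_succ)]
  simpa only [Finset.sum_range_sub] using hl.sub_const (f 0)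

lemma summable_zpow_neg_succ_pow {s : ℕ} (hs : s ≠ 0) :
    Summable fun i : ℕ ↦ ((2 : ℝ) ^ (-((i : ℤ) + 1))) ^ s := by
  have ratio (i : ℕ) : ((2 : ℝ) ^ (-((i : ℤ) + 1))) ^ s = ((2 : ℝ)⁻¹ ^ s) ^ (i + 1) := by
    rw [← pow_mul, mul_comm, pow_mul, zpow_neg, ← inv_zpow]
    norm_cast
  simp only [ratio]
  exact (summable_nat_add_iff 1).2 (summable_geometric_of_lt_one (by positivity)
    (pow_lt_one₀ (by norm_num) (by norm_num) hs))

/-- The smooth bumps `φ` that generate a Littlewood–Paley decomposition: `φ = 1` on `[-1, 1]` and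
`φ = 0` off `(-2, 2)`. -/
structure IsDyadicCutoff (φ : ℝ → ℝ) : Prop where
  contDiff : ContDiff ℝ (⊤ : ℕ∞) φ
  mem_Icc (ξ : ℝ) : φ ξ ∈ Set.Icc (0 : ℝ) 1
  eq_one {ξ : ℝ} (h : |ξ| ≤ 1) : φ ξ = 1
  eq_zero {ξ : ℝ} (h : 2 ≤ |ξ|) : φ ξ = 0

namespace IsDyadicCutoff

variable {φ : ℝ → ℝ} (hφ : IsDyadicCutoff φ) {s : ℕ}
include hφ

lemma comp_two_mul_le (ξ : ℝ) : φ (2 * ξ) ≤ φ ξ := by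
  rcases le_total |ξ| 1 with h | h
  · exact hφ.eq_one h ▸ (hφ.mem_Icc _).2
  · rw [hφ.eq_zero (ξ := 2 * ξ) (by rw [abs_mul, abs_two]; linarith)]
    exact (hφ.mem_Icc _).1

lemma psi_sq (ξ : ℝ) : psi φ ξ ^ 2 = φ ξ - φ (2 * ξ) :=
  Real.sq_sqrt (sub_nonneg.2 (hφ.comp_two_mul_le ξ))

lemma psi_sq_eq_zero {ξ : ℝ} (h : 2 ≤ |ξ|) : psi φ ξ ^ 2 = 0 := by
  rw [hφ.psi_sq, hφ.eq_zero h, hφ.eq_zero (by rw [abs_mul, abs_two]; linarith), sub_zero]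

lemma psi_sq_le_one (ξ : ℝ) : psi φ ξ ^ 2 ≤ 1 := by
  rw [hφ.psi_sq]
  linarith [(hφ.mem_Icc ξ).2, (hφ.mem_Icc (2 * ξ)).1]

lemma hasSum_psi_sq_two_pow_mul {ξ : ℝ} (hξ : ξ ≠ 0) :
    HasSum (fun i : ℕ ↦ psi φ (2 ^ i * ξ) ^ 2) (φ ξ) := by
  have mono : Monotone fun i : ℕ ↦ -φ (2 ^ i * ξ) := monotone_nat_of_le_succ fun i ↦ by
    rw [pow_succ', mul_assoc]
    exact neg_le_neg (hφ.comp_two_mul_le _)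
  have abs_tendsto : Tendsto (fun i : ℕ ↦ |2 ^ i * ξ|) atTop atTop := by
    simp only [abs_mul, abs_pow, abs_two]
    exact (tendsto_pow_atTop_atTop_of_one_lt one_lt_two).atTop_mul_const (abs_pos.2 hξ)
  have lim : Tendsto (fun i : ℕ ↦ -φ (2 ^ i * ξ)) atTop (𝓝 0) := by
    refine tendsto_const_nhds.congr' ?_
    filter_upwards [abs_tendsto.eventually_ge_atTop 2] with i hi
    rw [hφ.eq_zero hi, neg_zero]
  convert hasSum_sub_of_monotone mono lim using 2 with i
  · rw [hφ.psi_sq, pow_succ', mul_assoc, neg_sub_neg]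
  · rw [pow_zero, one_mul, sub_neg_eq_add, zero_add]

lemma hasSum_psi_sq_div_two_pow (ξ : ℝ) :
    HasSum (fun i : ℕ ↦ psi φ (ξ / 2 ^ i) ^ 2) (1 - φ (2 * ξ)) := by
  have halve (i : ℕ) : 2 * ξ / 2 ^ (i + 1) = ξ / 2 ^ i := by
    rw [pow_succ', mul_div_mul_left _ _ two_ne_zero]
  have mono : Monotone fun i : ℕ ↦ φ (2 * ξ / 2 ^ i) := monotone_nat_of_le_succ fun i ↦ by
    rw [halve, mul_div_assoc]
    exact hφ.comp_two_mul_le _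
  have abs_tendsto : Tendsto (fun i : ℕ ↦ |2 * ξ / 2 ^ i|) atTop (𝓝 0) := by
    simp only [abs_div, abs_pow, abs_two]
    exact tendsto_const_nhds.div_atTop (tendsto_pow_atTop_atTop_of_one_lt one_lt_two)
  have lim : Tendsto (fun i : ℕ ↦ φ (2 * ξ / 2 ^ i)) atTop (𝓝 1) := by
    refine tendsto_const_nhds.congr' ?_
    filter_upwards [abs_tendsto.eventually_le_const one_pos] with i hi
    rw [hφ.eq_one hi]
  convert hasSum_sub_of_monotone mono lim using 2 with i
  · rw [hφ.psi_sq, halve, mul_div_assoc]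
  · rw [pow_zero, div_one]

-- At `ξ = 0` the left side is `0`: no dyadic shell contains the origin.
lemma plo_two_mul_zpow (n : ℤ) {ξ : ℝ} (hξ : ξ ≠ 0) : plo φ (2 * 2 ^ n) ξ = φ (ξ / 2 ^ n) := by
  have hξ' : ξ / 2 ^ n ≠ 0 := div_ne_zero hξ (zpow_ne_zero n two_ne_zero)
  have lt_iff (k : ℤ) : (2 : ℝ) ^ k < 2 * 2 ^ n ↔ k ≤ n := by
    rw [← zpow_one_add₀ two_ne_zero, zpow_lt_zpow_iff_right₀ one_lt_two, add_comm,
      Int.lt_add_one_iff]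
  have support : (Function.support fun k : ℤ ↦
      if (2 : ℝ) ^ k < 2 * 2 ^ n then psi φ (ξ / 2 ^ k) ^ 2 else 0) ⊆
        Set.range fun i : ℕ ↦ n - (i : ℤ) := by
    intro k hk
    have hkn : k ≤ n := by
      by_contra h
      exact hk (if_neg (mt (lt_iff k).1 h))
    exact ⟨(n - k).toNat, by dsimp only; omega⟩
  have inj : Function.Injective fun i : ℕ ↦ n - (i : ℤ) :=
    sub_right_injective.comp Nat.cast_injective
  rw [plo, ← inj.tsum_eq support, ← (hφ.hasSum_psi_sq_two_pow_mul hξ').tsum_eq]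
  refine tsum_congr fun i ↦ ?_
  rw [if_pos ((lt_iff _).2 (by omega)), zpow_sub₀ two_ne_zero, zpow_natCast, div_div_eq_mul_div,
    mul_comm, mul_div_assoc]

lemma one_sub_mhi (hs : s ≠ 0) (ξ : ℝ) :
    1 - mhi φ s ξ = φ (2 * ξ) -
      ∑' i : ℕ, ((2 : ℝ) ^ (-((i : ℤ) + 1))) ^ s * psi φ (ξ / 2 ^ (-((i : ℤ) + 1))) ^ 2 := by
  set term : ℤ → ℝ := fun n ↦
    (if n < 0 then ((2 : ℝ) ^ n) ^ s else 1) * psi φ (ξ / 2 ^ n) ^ 2 with term_def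
  have term_neg (i : ℕ) : term (-((i : ℤ) + 1)) =
      ((2 : ℝ) ^ (-((i : ℤ) + 1))) ^ s * psi φ (ξ / 2 ^ (-((i : ℤ) + 1))) ^ 2 := by
    simp only [term_def]
    rw [if_pos (by omega)]
  have hasSum_high : HasSum (fun i : ℕ ↦ term i) (1 - φ (2 * ξ)) := by
    simpa only [term_def, (Int.natCast_nonneg _).not_gt, if_false, one_mul, zpow_natCast]
      using hφ.hasSum_psi_sq_div_two_pow ξ
  have summable_low : Summable fun i : ℕ ↦ term (-((i : ℤ) + 1)) := by
    simp only [term_neg]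
    exact (summable_zpow_neg_succ_pow hs).of_nonneg_of_le (fun i ↦ by positivity) fun i ↦
      mul_le_of_le_one_right (by positivity) (hφ.psi_sq_le_one _)
  have mhi_eq : mhi φ s ξ = 1 - φ (2 * ξ) + ∑' i : ℕ, term (-((i : ℤ) + 1)) :=
    (hasSum_high.of_nat_of_neg_add_one summable_low.hasSum).tsum_eq
  simp only [mhi_eq, term_neg]
  ring

lemma one_sub_mhi_eq_zero (hs : s ≠ 0) {ξ : ℝ} (h : 1 ≤ |ξ|) : 1 - mhi φ s ξ = 0 := by
  have tail (i : ℕ) : psi φ (ξ / 2 ^ (-((i : ℤ) + 1))) ^ 2 = 0 := by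
    refine hφ.psi_sq_eq_zero ?_
    rw [zpow_neg, div_inv_eq_mul, abs_mul, abs_zpow, abs_two]
    have two_le : (2 : ℝ) ≤ 2 ^ ((i : ℤ) + 1) := by
      simpa using zpow_le_zpow_right₀ one_le_two (show (1 : ℤ) ≤ i + 1 by omega)
    nlinarith
  rw [hφ.one_sub_mhi hs, hφ.eq_zero (by rw [abs_mul, abs_two]; linarith)]
  simp only [tail, mul_zero, tsum_zero, sub_zero]

lemma one_sub_mhi_sq_mul (hs : s ≠ 0) (ξ : ℝ) :
    (1 - mhi φ s ξ ^ 2) * φ ξ = 1 - mhi φ s ξ ^ 2 := by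
  rcases le_total |ξ| 1 with h | h
  · rw [hφ.eq_one h, mul_one]
  · rw [← sub_eq_zero.1 (hφ.one_sub_mhi_eq_zero hs h), one_pow, sub_self, zero_mul]

lemma hasCompactSupport : HasCompactSupport φ :=
  .of_support_subset_isCompact (isCompact_Icc (a := -2) (b := 2)) fun ξ hξ ↦ by
    rw [Set.mem_Icc, ← abs_le]
    by_contra! h
    exact hξ (hφ.eq_zero h.le)

lemma contDiff_mul_mem_fourierAlgebra {g : ℝ → ℂ} (hg : ContDiff ℝ (⊤ : ℕ∞) g) :
    (fun ξ ↦ g ξ * φ ξ) ∈ fourierAlgebra ℝ := by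
  have smooth : ContDiff ℝ (⊤ : ℕ∞) fun ξ ↦ (φ ξ : ℂ) :=
    Complex.ofRealCLM.contDiff.comp hφ.contDiff
  have compact : HasCompactSupport fun ξ ↦ (φ ξ : ℂ) :=
    hφ.hasCompactSupport.comp_left Complex.ofReal_zero
  exact mem_fourierAlgebra_of_hasCompactSupport compact.mul_left (hg.mul smooth)

lemma ofReal_mem_fourierAlgebra : (fun ξ ↦ (φ ξ : ℂ)) ∈ fourierAlgebra ℝ := by
  simpa only [one_mul] using hφ.contDiff_mul_mem_fourierAlgebra (contDiff_const (c := 1))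

lemma psi_sq_mem_fourierAlgebra : (fun ξ ↦ ((psi φ ξ ^ 2 : ℝ) : ℂ)) ∈ fourierAlgebra ℝ := by
  simpa only [hφ.psi_sq, Complex.ofReal_sub] using! sub_mem hφ.ofReal_mem_fourierAlgebra
    (comp_smul_mem_fourierAlgebra hφ.ofReal_mem_fourierAlgebra two_ne_zero)

lemma one_sub_mhi_mem_fourierAlgebra (hs : s ≠ 0) :
    (fun ξ ↦ ((1 - mhi φ s ξ : ℝ) : ℂ)) ∈ fourierAlgebra ℝ := by
  have low := tsum_comp_smul_mem_fourierAlgebra hφ.psi_sq_mem_fourierAlgebra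
    (c := fun i : ℕ ↦ (((2 : ℝ) ^ (-((i : ℤ) + 1))) ^ s : ℝ))
    (a := fun i : ℕ ↦ ((2 : ℝ) ^ (-((i : ℤ) + 1)))⁻¹)
    (by simpa only [Complex.norm_real] using (summable_zpow_neg_succ_pow hs).norm)
    fun i ↦ inv_ne_zero (zpow_ne_zero _ two_ne_zero)
  convert sub_mem (comp_smul_mem_fourierAlgebra hφ.ofReal_mem_fourierAlgebra two_ne_zero) low
    using 2 with ξ
  simp only [hφ.one_sub_mhi hs, Pi.sub_apply, smul_eq_mul, div_eq_inv_mul]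
  push_cast
  rfl

lemma one_sub_mhi_sq_mem_fourierAlgebra (hs : s ≠ 0) :
    (fun ξ ↦ ((1 - mhi φ s ξ ^ 2 : ℝ) : ℂ)) ∈ fourierAlgebra ℝ := by
  -- With `a = 1 - m_hi`, one has `1 - m_hi² = a + a - a²`.
  have a_mem := hφ.one_sub_mhi_mem_fourierAlgebra hs
  convert sub_mem (add_mem a_mem a_mem) (mul_mem a_mem a_mem) using 2 with ξ
  simp only [Pi.sub_apply, Pi.add_apply, Pi.mul_apply]
  push_cast
  ring

lemma I_mul_pow_mul_one_sub_mhi_sq_mem_fourierAlgebra (hs : s ≠ 0) (j : ℕ) :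
    (fun ξ : ℝ ↦ (Complex.I * ξ) ^ j * ((1 - mhi φ s ξ ^ 2 : ℝ) : ℂ)) ∈ fourierAlgebra ℝ := by
  have smooth : ContDiff ℝ (⊤ : ℕ∞) fun ξ : ℝ ↦ (Complex.I * ξ) ^ j :=
    (contDiff_const.mul Complex.ofRealCLM.contDiff).pow j
  convert mul_mem (hφ.contDiff_mul_mem_fourierAlgebra smooth)
    (hφ.one_sub_mhi_sq_mem_fourierAlgebra hs) using 2 with ξ
  rw [Pi.mul_apply, mul_assoc, ← Complex.ofReal_mul, mul_comm (φ ξ), hφ.one_sub_mhi_sq_mul hs]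

end IsDyadicCutoff

end Cutoff

section Multiplier

lemma ft_eq_fourier (f : ℝ → ℂ) (ξ : ℝ) :
    ft f ξ = (√(2 * Real.pi) : ℂ)⁻¹ * 𝓕 f (ξ / (2 * Real.pi)) := by
  rw [ft, Real.fourier_real_eq_integral_exp_smul]
  congr 2 with x
  rw [smul_eq_mul]
  congr 2
  push_cast
  field_simp

lemma fmul_eq_fourierInv (m : ℝ → ℝ) (f : ℝ → ℂ) :
    fmul m f = 𝓕⁻ fun ξ ↦ (m (2 * Real.pi * ξ) : ℂ) * 𝓕 f ξ := by
  ext x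
  have sqrt_mul_sqrt : (√(2 * Real.pi) : ℂ)⁻¹ * (√(2 * Real.pi) : ℂ)⁻¹ = (2 * Real.pi : ℝ)⁻¹ := by
    rw [← mul_inv, ← Complex.ofReal_mul, Real.mul_self_sqrt Real.two_pi_pos.le,
      Complex.ofReal_inv]
  set F : ℝ → ℂ := fun ξ ↦
    Complex.exp (Complex.I * ξ * x) * m ξ * 𝓕 f (ξ / (2 * Real.pi)) with F_def
  calc fmul m f x = (2 * Real.pi : ℝ)⁻¹ • ∫ ξ, F ξ := by
        simp only [fmul, ft_eq_fourier, mul_left_comm _ (√(2 * Real.pi) : ℂ)⁻¹, integral_const_mul,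
          Complex.real_smul, F_def]
        rw [← mul_assoc, sqrt_mul_sqrt]
    _ = ∫ ξ, F (2 * Real.pi * ξ) := by
        rw [Measure.integral_comp_mul_left, abs_of_pos (inv_pos.2 Real.two_pi_pos)]
    _ = 𝓕⁻ (fun ξ ↦ (m (2 * Real.pi * ξ) : ℂ) * 𝓕 f ξ) x := by
        rw [Real.fourierInv_eq']
        refine integral_congr_ae (.of_forall fun ξ ↦ ?_)
        simp only [F_def, mul_div_cancel_left₀ ξ Real.two_pi_pos.ne']
        rw [smul_eq_mul, mul_assoc]
        congr 2
        simp only [RCLike.inner_apply, conj_trivial]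
        push_cast
        ring

lemma iteratedDeriv_iteratedDeriv {𝕜 F : Type*} [NontriviallyNormedField 𝕜]
    [NormedAddCommGroup F] [NormedSpace 𝕜 F] (m n : ℕ) (f : 𝕜 → F) :
    iteratedDeriv m (iteratedDeriv n f) = iteratedDeriv (n + m) f := by
  rw [add_comm n m, iteratedDeriv_eq_iterate, iteratedDeriv_eq_iterate, iteratedDeriv_eq_iterate,
    Function.iterate_add_apply]

lemma coe_iterate_derivCLM (q : SchwartzMap ℝ ℂ) (n : ℕ) :
    ⇑((SchwartzMap.derivCLM ℝ ℂ)^[n] q) = iteratedDeriv n ⇑q := by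
  induction n with
  | zero => rfl
  | succ n ih => rw [Function.iterate_succ_apply', iteratedDeriv_succ, ← ih]; rfl

lemma fourier_iteratedDeriv_schwartzMap (q : SchwartzMap ℝ ℂ) (n : ℕ) (ξ : ℝ) :
    𝓕 (iteratedDeriv n ⇑q) ξ = (Complex.I * (2 * Real.pi * ξ : ℝ)) ^ n * 𝓕 ⇑q ξ := by
  have integrable_iteratedDeriv (k : ℕ) : Integrable (iteratedDeriv k ⇑q) := by
    rw [← coe_iterate_derivCLM]
    exact SchwartzMap.integrable _
  rw [Real.fourier_iteratedDeriv (N := ⊤) (q.smooth ⊤) (fun k _ ↦ integrable_iteratedDeriv k)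
    le_top]
  simp only [smul_eq_mul]
  push_cast
  ring

namespace IsDyadicCutoff

variable {φ : ℝ → ℝ} (hφ : IsDyadicCutoff φ)
include hφ

lemma integrable_mul_fourier (a : ℝ) (q : SchwartzMap ℝ ℂ) :
    Integrable fun ξ : ℝ ↦ (φ (a * ξ) : ℂ) * 𝓕 ⇑q ξ := by
  rw [← SchwartzMap.fourier_coe]
  refine (SchwartzMap.integrable (𝓕 q : SchwartzMap ℝ ℂ)).bdd_mul (c := 1) ?_ ?_
  · have continuous_φ := hφ.contDiff.continuous
    exact Continuous.aestronglyMeasurable (by fun_prop)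
  · refine .of_forall fun ξ ↦ ?_
    rw [Complex.norm_real, Real.norm_of_nonneg (hφ.mem_Icc _).1]
    exact (hφ.mem_Icc _).2

lemma fmul_plo_two_mul_zpow (n : ℤ) (f : ℝ → ℂ) :
    fmul (plo φ (2 * 2 ^ n)) f = 𝓕⁻ fun ξ ↦ (φ (2 * Real.pi / 2 ^ n * ξ) : ℂ) * 𝓕 f ξ := by
  rw [fmul_eq_fourierInv]
  refine funext fun x ↦ Real.fourierInv_congr_ae ?_ x
  filter_upwards [Measure.ae_ne volume 0] with ξ hξ
  rw [hφ.plo_two_mul_zpow n (mul_ne_zero Real.two_pi_pos.ne' hξ), mul_div_right_comm]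

lemma fmul_one_sub_mhi_sq_iteratedDeriv {s : ℕ} (hs : s ≠ 0) (j : ℕ) {N : ℝ} (hN : N ≠ 0)
    (q : SchwartzMap ℝ ℂ) :
    fmul (fun ξ ↦ 1 - mhi φ s (ξ / N) ^ 2) (iteratedDeriv j ⇑q) =
      N ^ j • 𝓕⁻ fun ξ ↦ (Complex.I * (2 * Real.pi / N * ξ : ℝ)) ^ j *
        ((1 - mhi φ s (2 * Real.pi / N * ξ) ^ 2 : ℝ) : ℂ) *
          ((φ (2 * Real.pi / N * ξ) : ℂ) * 𝓕 ⇑q ξ) := by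
  rw [fmul_eq_fourierInv]
  ext x
  simp only [Pi.smul_apply, Real.fourierInv_eq, ← integral_smul]
  congr 1 with ξ
  have dilate : 2 * Real.pi * ξ / N = 2 * Real.pi / N * ξ := mul_div_right_comm _ _ _
  have scale : 2 * Real.pi * ξ = N * (2 * Real.pi / N * ξ) := by field_simp
  rw [smul_comm (N ^ j), fourier_iteratedDeriv_schwartzMap, dilate, scale]
  congr 1
  set η := 2 * Real.pi / N * ξ
  have absorb : ((1 - mhi φ s η ^ 2 : ℝ) : ℂ) * φ η = (1 - mhi φ s η ^ 2 : ℝ) := by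
    rw [← Complex.ofReal_mul, hφ.one_sub_mhi_sq_mul hs]
  rw [Complex.real_smul, Complex.ofReal_mul, Complex.ofReal_pow]
  linear_combination -(N * (Complex.I * η)) ^ j * 𝓕 ⇑q ξ * absorb

end IsDyadicCutoff

end Multiplier

theorem stmt9_general {φ : ℝ → ℝ} (hφ : IsDyadicCutoff φ) {s : ℕ} (hs : s ≠ 0) (j : ℕ) :
    ∃ C : ℝ≥0, 0 < C ∧ ∀ p : ℝ≥0∞, 1 ≤ p → ∀ n : ℤ, ∀ q : SchwartzMap ℝ ℂ,
      eLpNorm (fmul (fun ξ ↦ 1 - mhi φ s (ξ / (2 : ℝ) ^ n) ^ 2) (iteratedDeriv j ⇑q)) p volume ≤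
        C * ENNReal.ofReal (((2 : ℝ) ^ n) ^ j) *
          eLpNorm (fmul (plo φ (2 * (2 : ℝ) ^ n)) ⇑q) p volume := by
  obtain ⟨C, hC⟩ := exists_eLpNorm_fourierInv_mul_le
    (hφ.I_mul_pow_mul_one_sub_mhi_sq_mem_fourierAlgebra hs j)
  refine ⟨C + 1, by positivity, fun p hp n q ↦ ?_⟩
  have hN : (2 : ℝ) ^ n ≠ 0 := zpow_ne_zero n two_ne_zero
  have bound := hC (2 * Real.pi / 2 ^ n) (div_ne_zero Real.two_pi_pos.ne' hN) p hp _
    (hφ.integrable_mul_fourier (2 * Real.pi / 2 ^ n) q)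
  rw [hφ.fmul_one_sub_mhi_sq_iteratedDeriv hs j hN, hφ.fmul_plo_two_mul_zpow, eLpNorm_const_smul,
    Real.enorm_of_nonneg (by positivity), mul_right_comm, mul_comm _ (ENNReal.ofReal _)]
  gcongr
  exact bound.trans (by gcongr; exact le_self_add)

/-- Bernstein-type inequality
`‖Π²_{<N} q^{(s+j)}‖_{L^p} ≲ N^j ‖P²_{<2N} q^{(s)}‖_{L^p}` uniformly in `N ∈ 2^ℤ`. -/
theorem stmt9 (φ : ℝ → ℝ) (hφ : ContDiff ℝ (⊤ : ℕ∞) φ)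
    (hrange : ∀ ξ : ℝ, φ ξ ∈ Set.Icc (0 : ℝ) 1)
    (hone : ∀ ξ : ℝ, |ξ| ≤ 1 → φ ξ = 1) (hzero : ∀ ξ : ℝ, 2 ≤ |ξ| → φ ξ = 0)
    (s : ℕ) (hs : 3 ≤ s) (p : ℝ≥0∞) (hp : 1 ≤ p) (j : ℕ) (hj : 0 < j) :
    ∃ C : ℝ≥0, 0 < C ∧ ∀ n : ℤ, ∀ q : SchwartzMap ℝ ℂ,
      eLpNorm (fmul (fun ξ => 1 - (mhi φ s (ξ / (2 : ℝ) ^ n)) ^ 2)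
          (iteratedDeriv (s + j) ⇑q)) p volume ≤
        C * ENNReal.ofReal (((2 : ℝ) ^ n) ^ j) *
          eLpNorm (fmul (plo φ (2 * (2 : ℝ) ^ n)) (iteratedDeriv s ⇑q)) p volume := by
  obtain ⟨C, hC, bound⟩ := stmt9_general ⟨hφ, hrange, @hone, @hzero⟩ (s := s) (by omega) j
  refine ⟨C, hC, fun n q ↦ ?_⟩
  simpa only [coe_iterate_derivCLM, iteratedDeriv_iteratedDeriv]
    using bound p hp n ((SchwartzMap.derivCLM ℝ ℂ)^[s] q)
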